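/- Let d ≥ 1 be an integer. There exists a constant C = C(d) > 0 such that for every s ∈ ℝ, every 1 ≤ p, r ≤ ∞, every 1 ≤ q₁ ≤ ∞, and every a ∈ 𝒮(ℝ^d), the Poisson extension u(x, t) := (2π)^{−d} ∫_{ℝ^d} e^{i x·ξ} e^{−t|ξ|} F[a](ξ) dξ (for x ∈ ℝ^d, t > 0) satisfies ‖u‖_{L̃^{q₁}(Ḃ^{s + 1/q₁}_{p,r})} ≤ C ‖a‖_{Ḃ^s_{p,r}}, with the convention 1/∞ = 0. (Maximal regularity estimate for the boundary semigroup e^{−t|∇|} in Chemin–Lerner spaces.) -/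

import Mathlib

/-!
After localization to frequencies `|ξ| ∼ 2^j`, the multiplier `e^{-t|ξ|}` acts as convolution with
an `L¹` kernel whose norm decays in `2^j t`. More precisely, fix a smooth cutoff `χ` and a smooth
positive `ρ` such that `χ = 1` and `ρ = |ξ|` on the support of `φ̂₀`. The symbols `χ e^{-τρ}` are
Schwartz, and all their Schwartz seminorms are `O((1+τ²)⁻¹)`, since `ρ` is bounded below. As the
`L¹` norm of the inverse Fourier transform is a continuous seminorm on the Schwartz space, the
kernels `K_τ` satisfy `‖K_τ‖_{L¹} ≤ C/(1+τ²)` (`exists_kernel`).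

On the Fourier side, `Δ_j u(t)` equals `2^{dj} K_{2^j t}(2^j ·) * Δ_j a` (`LP_poisson_eq`), so that
Young's inequality (`eLpNorm_conv_le`) gives `‖Δ_j u(t)‖_p ≤ C (1+(2^j t)²)⁻¹ ‖Δ_j a‖_p`.
Because `(1+τ²)^{-q} ≤ (1+τ²)⁻¹` for `q ≥ 1`, the `L^q` norm in time of the prefactor is at most
`C (2^{-j} π/2)^{1/q} ≤ C (π/2) 2^{-j/q}` (`LqLp_le`). This is the gain of `1/q` derivatives with
a constant uniform in `q`, and taking `ℓ^r` norms in `j` concludes.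
-/

open MeasureTheory Filter Complex
open scoped ENNReal NNReal RealInnerProductSpace Topology

noncomputable section

abbrev Rd (d : ℕ) := EuclideanSpace ℝ (Fin d)

/-- Fourier transform with the paper's convention `F[f](ξ) = ∫ e^{-i x·ξ} f(x) dx`. -/
def FT {d : ℕ} (f : Rd d → ℂ) (ξ : Rd d) : ℂ :=
  ∫ x : Rd d, Complex.exp (-Complex.I * (↑(⟪x, ξ⟫) : ℂ)) * f x

/-- A Littlewood–Paley family: a Schwartz function `φ₀` whose Fourier transform is
real, takes values in `[0,1]`, is supported in the annulus `1/2 ≤ |ξ| ≤ 2`, and whose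
dyadic dilates sum to `1` away from the origin. -/
structure LPData (d : ℕ) where
  φ : SchwartzMap (Rd d) ℂ
  him : ∀ ξ : Rd d, (FT (⇑φ) ξ).im = 0
  h0 : ∀ ξ : Rd d, 0 ≤ (FT (⇑φ) ξ).re
  h1 : ∀ ξ : Rd d, (FT (⇑φ) ξ).re ≤ 1
  hsupp : ∀ ξ : Rd d, FT (⇑φ) ξ ≠ 0 → (1/2 : ℝ) ≤ ‖ξ‖ ∧ ‖ξ‖ ≤ 2
  hsum : ∀ ξ : Rd d, ξ ≠ 0 → HasSum (fun j : ℤ => FT (⇑φ) ((2:ℝ) ^ (-j) • ξ)) 1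

/-- Littlewood–Paley block `Δ_j f = φ_j * f`, where `φ_j(x) = 2^{dj} φ₀(2^j x)`. -/
def LP {d : ℕ} (P : LPData d) (j : ℤ) (f : Rd d → ℂ) (x : Rd d) : ℂ :=
  ∫ y : Rd d, (((2:ℝ) ^ ((d : ℤ) * j) : ℝ) : ℂ) * P.φ ((2:ℝ) ^ j • y) * f (x - y)

/-- `ℓ^r(ℤ)`-norm of a family of extended nonnegative reals. -/
def ellNorm (r : ℝ≥0∞) (a : ℤ → ℝ≥0∞) : ℝ≥0∞ :=
  if r = ∞ then ⨆ j, a j else (∑' j, a j ^ r.toReal) ^ (1 / r.toReal)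

/-- Homogeneous Besov norm `‖f‖_{Ḃ^s_{p,r}}`. -/
def besov {d : ℕ} (P : LPData d) (s : ℝ) (p r : ℝ≥0∞) (f : Rd d → ℂ) : ℝ≥0∞ :=
  ellNorm r fun j => ENNReal.ofReal ((2:ℝ) ^ (s * (j:ℝ))) * eLpNorm (LP P j f) p volume

/-- Mixed norm `L^q_t(0,∞; L^p_x)`. -/
def LqLp {d : ℕ} (q p : ℝ≥0∞) (g : ℝ → Rd d → ℂ) : ℝ≥0∞ :=
  if q = ∞ then essSup (fun t => eLpNorm (g t) p volume) (volume.restrict (Set.Ioi (0:ℝ)))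
  else (∫⁻ t in Set.Ioi (0:ℝ), (eLpNorm (g t) p volume) ^ q.toReal) ^ (1 / q.toReal)

/-- Chemin–Lerner norm `‖f‖_{L̃^q(Ḃ^s_{p,r})}` on `ℝ^d × (0,∞)`. -/
def CL {d : ℕ} (P : LPData d) (s : ℝ) (q p r : ℝ≥0∞) (f : ℝ → Rd d → ℂ) : ℝ≥0∞ :=
  ellNorm r fun j => ENNReal.ofReal ((2:ℝ) ^ (s * (j:ℝ))) * LqLp q p fun t => LP P j (f t)

/-- `f : ℝ^d × (0,∞) → ℂ` (curried as `f t x`) is slice-Schwartz: continuous on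
`ℝ^d × (0,∞)` and Schwartz in `x` for each fixed `t > 0`. -/
def SliceSchwartz {d : ℕ} (f : ℝ → Rd d → ℂ) : Prop :=
  ContinuousOn (fun z : Rd d × ℝ => f z.2 z.1) (Set.univ ×ˢ Set.Ioi 0) ∧
  ∀ t : ℝ, 0 < t → ∃ g : SchwartzMap (Rd d) ℂ, f t = ⇑g

open scoped FourierTransform SchwartzMap

/-! ### The localized Poisson kernel -/

section Kernel

open scoped ContDiff

lemma pow_mul_exp_le (c : ℝ) (hc : 0 < c) (i : ℕ) :
    ∃ B : ℝ, 0 ≤ B ∧ ∀ τ : ℝ, 0 ≤ τ → τ ^ i * Real.exp (-τ * c) ≤ B / (1 + τ ^ 2) := by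
  have key : ∀ m : ℕ, ∀ τ : ℝ, 0 ≤ τ → τ ^ m * Real.exp (-τ * c) ≤ m.factorial / c ^ m := by
    intro m τ hτ
    have h := Real.pow_div_factorial_le_exp (x := τ * c) (by positivity) m
    have hm : (0 : ℝ) < m.factorial := by exact_mod_cast m.factorial_pos
    rw [neg_mul, Real.exp_neg, ← div_eq_mul_inv, div_le_div_iff₀ (Real.exp_pos _) (by positivity),
      ← mul_pow]
    rw [div_le_iff₀ hm] at h
    linarith
  refine ⟨i.factorial / c ^ i + (i + 2).factorial / c ^ (i + 2), by positivity, fun τ hτ => ?_⟩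
  rw [le_div_iff₀ (by positivity)]
  have h1 := key i τ hτ
  have h2 := key (i + 2) τ hτ
  rw [pow_add] at h2
  nlinarith

/-- The first `n` derivatives of `r ↦ e^{-τr}` are `O((1+τ²)⁻¹)` on `[c, ∞)`, uniformly in `τ ≥ 0`:
the factor `τ^i` is absorbed by `e^{-cτ}`. -/
lemma norm_iteratedFDeriv_exp_le (c : ℝ) (hc : 0 < c) (n : ℕ) :
    ∃ B : ℝ, 0 ≤ B ∧ ∀ τ : ℝ, 0 ≤ τ → ∀ r : ℝ, c ≤ r → ∀ i ≤ n,
      ‖iteratedFDeriv ℝ i (fun r : ℝ => Real.exp (-τ * r)) r‖ ≤ B / (1 + τ ^ 2) := by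
  choose B hB0 hB using pow_mul_exp_le c hc
  refine ⟨∑ i ∈ Finset.range (n + 1), B i, Finset.sum_nonneg fun i _ => hB0 i, ?_⟩
  intro τ hτ r hr i hi
  rw [norm_iteratedFDeriv_eq_norm_iteratedDeriv, iteratedDeriv_exp_const_mul]
  have h1 : ‖(-τ) ^ i * Real.exp (-τ * r)‖ ≤ τ ^ i * Real.exp (-τ * c) := by
    rw [norm_mul, norm_pow, norm_neg, Real.norm_of_nonneg hτ, Real.norm_of_nonneg (Real.exp_pos _).le]
    gcongr ?_ * Real.exp ?_
    nlinarith
  refine h1.trans ((hB i τ hτ).trans ?_)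
  gcongr
  exact Finset.single_le_sum (f := B) (fun i _ => hB0 i) (Finset.mem_range.2 (by omega))

/-- On a ball, finitely many derivatives of a smooth function are bounded by a common constant,
chosen at least `1` so that it is dominated by its positive powers. -/
lemma exists_iteratedFDeriv_bound {E : Type*} [NormedAddCommGroup E] [NormedSpace ℝ E]
    [ProperSpace E] {f : E → ℝ} (hf : ContDiff ℝ ∞ f) (R : ℝ) (n : ℕ) :
    ∃ D : ℝ, 1 ≤ D ∧ ∀ x ∈ Metric.closedBall (0 : E) R, ∀ i ≤ n,
      ‖iteratedFDeriv ℝ i f x‖ ≤ D := by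
  have h : ∀ i : ℕ, ∃ D : ℝ, ∀ x ∈ Metric.closedBall (0 : E) R, ‖iteratedFDeriv ℝ i f x‖ ≤ D :=
    fun i => (isCompact_closedBall (0 : E) R).exists_bound_of_continuousOn
      (hf.continuous_iteratedFDeriv (by exact_mod_cast le_top)).continuousOn
  choose D hD using h
  refine ⟨1 + ∑ i ∈ Finset.range (n + 1), |D i|, ?_, ?_⟩
  · have : 0 ≤ ∑ i ∈ Finset.range (n + 1), |D i| := Finset.sum_nonneg fun i _ => abs_nonneg _
    linarith
  · intro x hx i hi
    have := Finset.single_le_sum (f := fun i => |D i|) (fun i _ => abs_nonneg _)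
      (Finset.mem_range.2 (Nat.lt_succ_of_le hi))
    have h2 := hD i x hx
    have h3 := le_abs_self (D i)
    linarith

/-- Derivatives of the localized symbol `χ e^{-τρ}` decay like `(1+τ²)⁻¹`, since `ρ` is bounded
below and `τ^i e^{-cτ}` absorbs the powers of `τ` produced by the chain rule. -/
lemma symbol_deriv_bound {E : Type*} [NormedAddCommGroup E] [NormedSpace ℝ E]
    [ProperSpace E] {χ ρ : E → ℝ} (hχ : ContDiff ℝ ∞ χ) (hρ : ContDiff ℝ ∞ ρ) {c R : ℝ}
    (hc : 0 < c) (hρc : ∀ x, c ≤ ρ x) (n : ℕ) :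
    ∃ B : ℝ, 0 ≤ B ∧ ∀ τ : ℝ, 0 ≤ τ → ∀ x ∈ Metric.closedBall (0 : E) R,
      ‖iteratedFDeriv ℝ n (fun x => χ x * Real.exp (-τ * ρ x)) x‖ ≤ B / (1 + τ ^ 2) := by
  obtain ⟨A, hA0, hA⟩ := norm_iteratedFDeriv_exp_le c hc n
  obtain ⟨D, hD1, hD⟩ := exists_iteratedFDeriv_bound hρ R n
  obtain ⟨X, hX1, hX⟩ := exists_iteratedFDeriv_bound hχ R n
  refine ⟨∑ i ∈ Finset.range (n + 1), (n.choose i : ℝ) * X * ((n - i).factorial * A * D ^ (n - i)),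
    by positivity, ?_⟩
  intro τ hτ x hx
  have hg : ContDiff ℝ ∞ (fun r : ℝ => Real.exp (-τ * r)) := by fun_prop
  have hcomp : ContDiff ℝ ∞ (fun x => Real.exp (-τ * ρ x)) := hg.comp hρ
  refine (norm_iteratedFDeriv_mul_le hχ hcomp x (n := n) (by exact_mod_cast le_top)).trans ?_
  rw [Finset.sum_div]
  refine Finset.sum_le_sum fun i hi => ?_
  have hin : i ≤ n := Nat.lt_succ_iff.1 (Finset.mem_range.1 hi)
  have h1 : ‖iteratedFDeriv ℝ (n - i) (fun x => Real.exp (-τ * ρ x)) x‖ ≤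
      (n - i).factorial * (A / (1 + τ ^ 2)) * D ^ (n - i) := by
    refine norm_iteratedFDeriv_comp_le (N := ∞) (g := fun r : ℝ => Real.exp (-τ * r)) (f := ρ) hg hρ
      (WithTop.coe_le_coe.2 le_top) x ?_ ?_
    · intro k hk
      exact hA τ hτ _ (hρc x) k (by omega)
    · intro k hk1 hk
      exact (hD x hx k (by omega)).trans (le_self_pow₀ hD1 (by omega))
  calc _ ≤ (n.choose i : ℝ) * X * ((n - i).factorial * (A / (1 + τ ^ 2)) * D ^ (n - i)) := by
        gcongr
        exact hX x hx i hin
    _ = _ := by ring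

/-- Localized Poisson kernel: a Schwartz function whose Fourier transform is `e^{-2πτ|v|}` on
the annulus `1/(4π) ≤ |v| ≤ 1/π`, with `L¹` norm `O((1+τ²)⁻¹)`. -/
lemma exists_kernel (d : ℕ) : ∃ C : ℝ, 0 < C ∧ ∀ τ : ℝ, 0 ≤ τ → ∃ K : 𝓢(Rd d, ℂ),
    (∀ v : Rd d, 1 / (4 * Real.pi) ≤ ‖v‖ → ‖v‖ ≤ 1 / Real.pi →
      𝓕 (K : Rd d → ℂ) v = ((Real.exp (-τ * (2 * Real.pi * ‖v‖)) : ℝ) : ℂ)) ∧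
    ∫ x, ‖K x‖ ≤ C / (1 + τ ^ 2) := by
  have hpi := Real.pi_pos
  let b : ContDiffBump (0 : Rd d) := ⟨1 / (8 * Real.pi), 1 / (4 * Real.pi), by positivity, by
    apply one_div_lt_one_div_of_lt <;> linarith⟩
  let χ : ContDiffBump (0 : Rd d) := ⟨1, 2, by positivity, by norm_num⟩
  -- `|v|²` is lifted to a positive function near the origin, so that its square root is smooth
  let σ : Rd d → ℝ := fun v => ‖v‖ ^ 2 + b v
  let ρ : Rd d → ℝ := fun v => 2 * Real.pi * Real.sqrt (σ v)
  let c₀ : ℝ := min 1 ((1 / (8 * Real.pi)) ^ 2)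
  have hc₀ : 0 < c₀ := by positivity
  have hσ : ∀ v, c₀ ≤ σ v := by
    intro v
    by_cases h : ‖v‖ ≤ 1 / (8 * Real.pi)
    · have : b v = 1 := b.one_of_mem_closedBall (mem_closedBall_zero_iff.2 h)
      have h2 : c₀ ≤ 1 := min_le_left _ _
      simp only [σ, this]
      nlinarith [sq_nonneg ‖v‖]
    · have h2 : c₀ ≤ (1 / (8 * Real.pi)) ^ 2 := min_le_right _ _
      have h3 : (1 / (8 * Real.pi)) ^ 2 ≤ ‖v‖ ^ 2 := by
        push Not at h
        gcongr
      have := b.nonneg (x := v)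
      simp only [σ]
      linarith
  have hσs : ContDiff ℝ ∞ σ := (contDiff_norm_sq ℝ).add b.contDiff
  have hρs : ContDiff ℝ ∞ ρ :=
    contDiff_const.mul (hσs.sqrt fun v => (hc₀.trans_le (hσ v)).ne')
  have hρc : ∀ v, 2 * Real.pi * Real.sqrt c₀ ≤ ρ v := fun v => by
    simp only [ρ]
    have := Real.sqrt_le_sqrt (hσ v)
    gcongr
  have hc : 0 < 2 * Real.pi * Real.sqrt c₀ := by positivity
  have hχs : ContDiff ℝ ∞ χ := χ.contDiff
  let ψ : ℝ → Rd d → ℝ := fun τ v => χ v * Real.exp (-τ * ρ v)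
  have hψs : ∀ τ, ContDiff ℝ ∞ (ψ τ) := fun τ =>
    hχs.mul (Real.contDiff_exp.comp (contDiff_const.mul hρs))
  have hψc : ∀ τ, HasCompactSupport (ψ τ) := fun τ => χ.hasCompactSupport.mul_right
  let Ψ : ℝ → 𝓢(Rd d, ℂ) := fun τ =>
    HasCompactSupport.toSchwartzMap (f := fun v => ((ψ τ v : ℝ) : ℂ))
      ((hψc τ).comp_left (g := fun x : ℝ => (x : ℂ)) (by simp))
      (Complex.ofRealCLM.contDiff.comp (hψs τ))
  have hsemi : ∀ k n : ℕ, ∃ B : ℝ, 0 ≤ B ∧ ∀ τ, 0 ≤ τ →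
      SchwartzMap.seminorm ℂ k n (Ψ τ) ≤ B / (1 + τ ^ 2) := by
    intro k n
    obtain ⟨B, hB0, hB⟩ := symbol_deriv_bound (R := 2) hχs hρs hc hρc n
    refine ⟨2 ^ k * B, by positivity, fun τ hτ => ?_⟩
    refine SchwartzMap.seminorm_le_bound ℂ k n _ (by positivity) fun x => ?_
    have e1 : ‖iteratedFDeriv ℝ n (Ψ τ) x‖ = ‖iteratedFDeriv ℝ n (ψ τ) x‖ :=
      Complex.ofRealLI.norm_iteratedFDeriv_comp_left (hψs τ).contDiffAt (by exact_mod_cast le_top)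
    rw [e1]
    by_cases hx : x ∈ Metric.closedBall (0 : Rd d) 2
    · rw [mul_div_assoc]
      gcongr
      · simpa using hx
      · exact hB τ hτ x hx
    · have : iteratedFDeriv ℝ n (ψ τ) x = 0 := by
        by_contra h
        apply hx
        have h1 := support_iteratedFDeriv_subset (𝕜 := ℝ) n (f := ψ τ) h
        have h2 : tsupport (ψ τ) ⊆ tsupport χ :=
          closure_mono (Function.support_mul_subset_left _ _)
        have h3 := h2 h1
        rwa [χ.tsupport_eq] at h3
      rw [this]
      simp
      positivity
  -- the `L¹` norm of the inverse Fourier transform is a continuous seminorm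
  let T : 𝓢(Rd d, ℂ) →L[ℂ] Lp ℂ 1 (volume : Measure (Rd d)) :=
    (SchwartzMap.toLpCLM ℂ ℂ 1 volume).comp (FourierTransform.fourierInvCLM ℂ 𝓢(Rd d, ℂ))
  obtain ⟨S, C, hC, hSC⟩ := Seminorm.bound_of_continuous (schwartz_withSeminorms ℂ (Rd d) ℂ)
    ((normSeminorm ℂ (Lp ℂ 1 (volume : Measure (Rd d)))).comp T.toLinearMap)
    (by exact continuous_norm.comp T.continuous)
  choose B hB0 hB using hsemi
  refine ⟨C * ∑ i ∈ S, B i.1 i.2 + 1, ?_, fun τ hτ => ⟨𝓕⁻ (Ψ τ), ?_, ?_⟩⟩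
  · have : 0 ≤ ∑ i ∈ S, B i.1 i.2 := Finset.sum_nonneg fun i _ => hB0 _ _
    positivity
  · intro v h1 h2
    have : 𝓕 ((𝓕⁻ (Ψ τ) : 𝓢(Rd d, ℂ)) : Rd d → ℂ) = Ψ τ := by
      rw [← SchwartzMap.fourier_coe, FourierTransform.fourier_fourierInv_eq]
    rw [this]
    have hχ1 : χ v = 1 := χ.one_of_mem_closedBall (by
      have : 1 / Real.pi ≤ 1 := by
        rw [div_le_one hpi]; linarith [Real.pi_gt_three]
      have h3 : ‖v‖ ≤ 1 := h2.trans this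
      simpa [χ] using h3)
    have hb0 : b v = 0 := b.zero_of_le_dist (by simpa [b] using h1)
    have hρv : ρ v = 2 * Real.pi * ‖v‖ := by
      simp only [ρ, σ, hb0, add_zero, Real.sqrt_sq (norm_nonneg _)]
    change ((ψ τ v : ℝ) : ℂ) = _
    simp only [ψ, hχ1, hρv, one_mul]
  · have h1 := hSC (Ψ τ)
    have h2 : ‖T (Ψ τ)‖ = ∫ x, ‖(𝓕⁻ (Ψ τ) : 𝓢(Rd d, ℂ)) x‖ := SchwartzMap.norm_toLp_one
    rw [← h2]
    have h3 : (S.sup (schwartzSeminormFamily ℂ (Rd d) ℂ)) (Ψ τ) ≤ ∑ i ∈ S, B i.1 i.2 / (1 + τ ^ 2) := by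
      refine Seminorm.finset_sup_apply_le (Finset.sum_nonneg fun i _ => ?_) fun i hi => ?_
      · have := hB0 i.1 i.2
        positivity
      · refine (hB i.1 i.2 τ hτ).trans ?_
        exact Finset.single_le_sum (f := fun i : ℕ × ℕ => B i.1 i.2 / (1 + τ ^ 2))
          (fun i _ => by have := hB0 i.1 i.2; positivity) hi
    have h4 : ‖T (Ψ τ)‖ ≤ C * (S.sup (schwartzSeminormFamily ℂ (Rd d) ℂ)) (Ψ τ) := h1
    rw [← Finset.sum_div] at h3
    calc ‖T (Ψ τ)‖ ≤ C * ((∑ i ∈ S, B i.1 i.2) / (1 + τ ^ 2)) := h4.trans (by gcongr)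
      _ = (C * ∑ i ∈ S, B i.1 i.2) / (1 + τ ^ 2) := by ring
      _ ≤ _ := by gcongr; linarith

end Kernel

/-! ### Young's inequality -/

/-- Young's inequality `L¹ * L^p ⊆ L^p`, in the form needed for convolution blocks. -/
lemma eLpNorm_conv_le {d : ℕ} {k f : Rd d → ℂ} (hk : Integrable k) (hf : Continuous f)
    {p : ℝ≥0∞} (hp : 1 ≤ p) :
    eLpNorm (fun x => ∫ y, k y * f (x - y)) p volume
      ≤ ENNReal.ofReal (∫ y, ‖k y‖) * eLpNorm f p volume := by
  have hN : ENNReal.ofReal (∫ y, ‖k y‖) = ∫⁻ y, ‖k y‖ₑ := ofReal_integral_norm_eq_lintegral_enorm hk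
  rw [hN]
  set N := ∫⁻ y, ‖k y‖ₑ with hNdef
  have hpt : ∀ x, ‖∫ y, k y * f (x - y)‖ₑ ≤ ∫⁻ y, ‖k y‖ₑ * ‖f (x - y)‖ₑ := fun x => by
    refine (enorm_integral_le_lintegral_enorm _).trans_eq ?_
    simp_rw [enorm_mul]
  have hkm : AEMeasurable (fun y => ‖k y‖ₑ) volume := hk.aestronglyMeasurable.enorm
  by_cases hptop : p = ∞
  · subst hptop
    rw [eLpNorm_exponent_top, eLpNorm_exponent_top]
    refine essSup_le_of_ae_le _ (Eventually.of_forall fun x => (hpt x).trans ?_)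
    rw [hNdef, ← lintegral_mul_const'' _ hkm]
    refine lintegral_mono_ae ?_
    have h1 : ∀ᵐ y ∂(volume : Measure (Rd d)), ‖f y‖ₑ ≤ eLpNormEssSup f volume :=
      enorm_ae_le_eLpNormEssSup f volume
    have h2 := (Measure.measurePreserving_sub_left
      (volume : Measure (Rd d)) x).quasiMeasurePreserving.ae h1
    filter_upwards [h2] with y hy
    gcongr
  · have hp0 : p ≠ 0 := (zero_lt_one.trans_le hp).ne'
    have hq1 : 1 ≤ p.toReal := by
      rw [← ENNReal.toReal_one]
      exact ENNReal.toReal_mono hptop hp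
    set q := p.toReal with hq
    have hq0 : 0 < q := by linarith
    rw [eLpNorm_eq_lintegral_rpow_enorm_toReal hp0 hptop,
      eLpNorm_eq_lintegral_rpow_enorm_toReal hp0 hptop]
    simp only [← hq]
    -- Jensen's inequality for the measure `|k(y)| dy`
    have hJ : ∀ x, (∫⁻ y, ‖k y‖ₑ * ‖f (x - y)‖ₑ) ^ q
        ≤ N ^ (q - 1) * ∫⁻ y, ‖k y‖ₑ * ‖f (x - y)‖ₑ ^ q := by
      intro x
      have hm : Measurable fun y => f (x - y) :=
        (hf.comp (continuous_const.sub continuous_id)).measurable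
      have := eLpNorm_le_eLpNorm_mul_rpow_measure_univ (μ := volume.withDensity fun y => ‖k y‖ₑ)
        (f := fun y => f (x - y)) hp hm.aestronglyMeasurable
      rw [eLpNorm_one_eq_lintegral_enorm, eLpNorm_eq_lintegral_rpow_enorm_toReal hp0 hptop,
        lintegral_withDensity_eq_lintegral_mul₀ hkm hm.enorm.aemeasurable,
        lintegral_withDensity_eq_lintegral_mul₀ hkm (hm.enorm.pow_const _).aemeasurable,
        withDensity_apply _ MeasurableSet.univ, Measure.restrict_univ] at this
      simp only [Pi.mul_apply, ← hq, ← hNdef, ENNReal.toReal_one, div_one] at this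
      calc _ ≤ _ := ENNReal.rpow_le_rpow this hq0.le
        _ = _ := by
          rw [ENNReal.mul_rpow_of_nonneg _ _ hq0.le, ← ENNReal.rpow_mul, ← ENNReal.rpow_mul,
            one_div_mul_cancel hq0.ne', ENNReal.rpow_one, sub_mul, one_mul,
            one_div_mul_cancel hq0.ne', mul_comm]
    have hmain : ∫⁻ x, ‖∫ y, k y * f (x - y)‖ₑ ^ q ≤ N ^ q * ∫⁻ x, ‖f x‖ₑ ^ q := by
      calc _ ≤ ∫⁻ x, N ^ (q - 1) * ∫⁻ y, ‖k y‖ₑ * ‖f (x - y)‖ₑ ^ q :=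
            lintegral_mono fun x => (ENNReal.rpow_le_rpow (hpt x) hq0.le).trans (hJ x)
        _ = N ^ (q - 1) * ∫⁻ x, ∫⁻ y, ‖k y‖ₑ * ‖f (x - y)‖ₑ ^ q := by
            refine lintegral_const_mul' _ _ (ENNReal.rpow_ne_top_of_nonneg (by linarith) ?_)
            rw [← hN]
            exact ENNReal.ofReal_ne_top
        _ = N ^ (q - 1) * ∫⁻ y, ∫⁻ x, ‖k y‖ₑ * ‖f (x - y)‖ₑ ^ q := by
            rw [lintegral_lintegral_swap]
            have h1 : AEMeasurable (fun z : Rd d × Rd d => ‖k z.2‖ₑ) (volume.prod volume) :=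
              hkm.comp_quasiMeasurePreserving Measure.quasiMeasurePreserving_snd
            have h2 : Measurable (fun z : Rd d × Rd d => ‖f (z.1 - z.2)‖ₑ ^ q) :=
              ((hf.comp (continuous_fst.sub continuous_snd)).measurable.enorm).pow_const _
            exact h1.mul h2.aemeasurable
        _ = N ^ (q - 1) * ∫⁻ y, ‖k y‖ₑ * ∫⁻ x, ‖f x‖ₑ ^ q := by
            congr 1
            refine lintegral_congr fun y => ?_
            rw [lintegral_const_mul' _ _ enorm_ne_top,
              lintegral_sub_right_eq_self (fun x => ‖f x‖ₑ ^ q) y]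
        _ = N ^ q * ∫⁻ x, ‖f x‖ₑ ^ q := by
            rw [lintegral_mul_const'' _ hkm, ← mul_assoc]
            congr 1
            conv_rhs => rw [show q = (q - 1) + 1 by ring,
              ENNReal.rpow_add_of_nonneg _ _ (by linarith) zero_le_one, ENNReal.rpow_one]
    calc _ ≤ (N ^ q * ∫⁻ x, ‖f x‖ₑ ^ q) ^ (1 / q) := ENNReal.rpow_le_rpow hmain (by positivity)
      _ = _ := by
        rw [ENNReal.mul_rpow_of_nonneg _ _ (by positivity), ← ENNReal.rpow_mul,
          mul_one_div_cancel hq0.ne', ENNReal.rpow_one]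

/-! ### Fourier calculus: convolution, dilation, normalization -/

/-- `k * 𝓕⁻ m = 𝓕⁻ (𝓕 k · m)` for integrable `k` and `m`. This is the self-adjointness of the
Fourier transform, because `y ↦ 𝓕⁻ m (x - y)` is the Fourier transform of `m` modulated by `x`. -/
lemma conv_fourierInv {d : ℕ} {k m : Rd d → ℂ} (hk : Integrable k) (hm : Integrable m) (x : Rd d) :
    ∫ y, k y * 𝓕⁻ m (x - y) = 𝓕⁻ (fun v => 𝓕 k v * m v) x := by
  have hL : Continuous fun p : Rd d × Rd d => innerₗ (Rd d) p.1 p.2 := by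
    simp only [innerₗ_apply_apply]
    fun_prop
  have hg : Integrable (fun v => Real.fourierChar ⟪v, x⟫ • m v) := by
    have := (Real.fourierIntegral_convergent_iff (μ := volume) (f := m) (-x)).2 hm
    simpa using this
  have h := VectorFourier.integral_fourierIntegral_smul_eq_flip (L := innerₗ (Rd d))
    Real.continuous_fourierChar hL hk hg
  have e1 : ∀ y, 𝓕⁻ m (x - y) = VectorFourier.fourierIntegral Real.fourierChar volume
      (innerₗ (Rd d)).flip (fun v => Real.fourierChar ⟪v, x⟫ • m v) y := by
    intro y
    rw [Real.fourierInv_eq]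
    simp only [VectorFourier.fourierIntegral]
    refine integral_congr_ae (Eventually.of_forall fun v => ?_)
    simp only [smul_smul, ← AddChar.map_add_eq_mul, LinearMap.flip_apply, innerₗ_apply_apply]
    congr 2
    rw [inner_sub_right, real_inner_comm v y]
    ring
  simp_rw [e1, ← smul_eq_mul]
  rw [← h, Real.fourierInv_eq]
  refine integral_congr_ae (Eventually.of_forall fun v => ?_)
  simp only [smul_eq_mul, Circle.smul_def, Real.fourier_eq, VectorFourier.fourierIntegral,
    innerₗ_apply_apply]
  ring

/-- The `L¹`-normalized dyadic dilate `2^{dj} k(2^j ·)`. -/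
def dil {d : ℕ} (j : ℤ) (k : Rd d → ℂ) (y : Rd d) : ℂ :=
  (((2:ℝ) ^ ((d : ℤ) * j) : ℝ) : ℂ) * k ((2:ℝ) ^ j • y)

lemma integral_dil {d : ℕ} {F : Type*} [NormedAddCommGroup F] [NormedSpace ℝ F] (j : ℤ)
    (g : Rd d → F) : ∫ y, (2:ℝ) ^ ((d : ℤ) * j) • g ((2:ℝ) ^ j • y) = ∫ y, g y := by
  have h2 : (0:ℝ) < 2 ^ j := by positivity
  rw [integral_smul, Measure.integral_comp_smul_of_nonneg volume g _ (hR := h2.le), smul_smul]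
  simp only [finrank_euclideanSpace, Fintype.card_fin]
  rw [mul_comm (d : ℤ) j, zpow_mul, zpow_natCast, mul_inv_cancel₀ (by positivity), one_smul]

lemma integrable_dil {d : ℕ} (j : ℤ) {k : Rd d → ℂ} (hk : Integrable k) : Integrable (dil j k) :=
  (hk.comp_smul (R := (2:ℝ) ^ j) (by positivity)).const_mul _

lemma integral_norm_dil {d : ℕ} (j : ℤ) (k : Rd d → ℂ) : ∫ y, ‖dil j k y‖ = ∫ y, ‖k y‖ := by
  rw [← integral_dil j fun y => ‖k y‖]
  refine integral_congr_ae (Eventually.of_forall fun y => ?_)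
  have : (0:ℝ) < 2 ^ ((d : ℤ) * j) := by positivity
  simp only [dil, norm_mul, Complex.norm_real, Real.norm_of_nonneg this.le, smul_eq_mul]

lemma fourier_dil {d : ℕ} (j : ℤ) (k : Rd d → ℂ) (v : Rd d) :
    𝓕 (dil j k) v = 𝓕 k ((2:ℝ) ^ (-j) • v) := by
  rw [Real.fourier_eq, Real.fourier_eq]
  refine Eq.trans ?_ (integral_dil j _)
  refine integral_congr_ae (Eventually.of_forall fun y => ?_)
  have h2 : (2:ℝ) ^ j ≠ 0 := by positivity
  have : ⟪(2:ℝ) ^ j • y, (2:ℝ) ^ (-j) • v⟫ = ⟪y, v⟫ := by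
    rw [inner_smul_left, inner_smul_right, zpow_neg]
    simp [h2]
  simp only [this, dil, Circle.smul_def, Complex.real_smul, smul_eq_mul]
  ring

/-- `FT` has no `2π` in its phase, whereas `𝓕` does; they differ by a dilation. -/
lemma FT_eq_fourier {d : ℕ} (f : Rd d → ℂ) (ξ : Rd d) :
    FT f ξ = 𝓕 f ((2 * Real.pi)⁻¹ • ξ) := by
  rw [Real.fourier_eq', FT]
  refine integral_congr_ae (Eventually.of_forall fun x => ?_)
  simp only [inner_smul_right, smul_eq_mul]
  congr 2
  push_cast
  have : (Real.pi : ℂ) ≠ 0 := by exact_mod_cast Real.pi_ne_zero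
  field_simp

/-- The Poisson extension as an inverse Fourier transform in the `2π`-normalization; the substitution
`ξ = 2πv` absorbs the prefactor `(2π)^{-d}`. -/
lemma poisson_eq_fourierInv {d : ℕ} (a : Rd d → ℂ) (t : ℝ) (x : Rd d) :
    (((2 * Real.pi) ^ d : ℝ) : ℂ)⁻¹ *
        ∫ ξ : Rd d, Complex.exp (Complex.I * (↑(⟪x, ξ⟫) : ℂ)) *
          Complex.exp (-(↑(t * ‖ξ‖) : ℂ)) * FT a ξ
      = 𝓕⁻ (fun v => ((Real.exp (-t * (2 * Real.pi * ‖v‖)) : ℝ) : ℂ) * 𝓕 a v) x := by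
  have hpi : (0:ℝ) < 2 * Real.pi := by positivity
  have h := Measure.integral_comp_smul_of_nonneg (volume : Measure (Rd d))
    (fun v : Rd d => Complex.exp (↑(2 * Real.pi * ⟪v, x⟫) * Complex.I) •
      (((Real.exp (-t * (2 * Real.pi * ‖v‖)) : ℝ) : ℂ) * 𝓕 a v)) (2 * Real.pi)⁻¹
      (hR := by positivity)
  simp only [finrank_euclideanSpace, Fintype.card_fin] at h
  rw [inv_pow, inv_inv, ← inv_smul_eq_iff₀ (by positivity)] at h
  rw [Real.fourierInv_eq', ← h, Complex.real_smul, Complex.ofReal_inv]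
  congr 1
  refine integral_congr_ae (Eventually.of_forall fun ξ => ?_)
  have e1 : 2 * Real.pi * ⟪(2 * Real.pi)⁻¹ • ξ, x⟫ = ⟪x, ξ⟫ := by
    rw [inner_smul_left, real_inner_comm]
    simp only [conj_trivial]
    field_simp
  have e2 : 2 * Real.pi * ‖(2 * Real.pi)⁻¹ • ξ‖ = ‖ξ‖ := by
    rw [norm_smul, Real.norm_of_nonneg (by positivity)]
    field_simp
  simp only [e1, e2, FT_eq_fourier, smul_eq_mul]
  rw [mul_assoc, mul_comm Complex.I]
  push_cast
  rw [neg_mul]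

lemma continuous_fourier' {d : ℕ} {m : Rd d → ℂ} (hm : Integrable m) : Continuous (𝓕 m) :=
  VectorFourier.fourierIntegral_continuous Real.continuous_fourierChar
    (by simp only [innerₗ_apply_apply]; fun_prop) hm

lemma continuous_fourierInv' {d : ℕ} {m : Rd d → ℂ} (hm : Integrable m) : Continuous (𝓕⁻ m) := by
  have : 𝓕⁻ m = fun w => 𝓕 m (-w) := funext fun w => Real.fourierInv_eq_fourier_neg m w
  rw [this]
  exact (continuous_fourier' hm).comp continuous_neg

/-! ### Frequency blocks of the Poisson extension -/

lemma LP_eq {d : ℕ} (P : LPData d) (j : ℤ) {m : Rd d → ℂ} (hm : Integrable m) :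
    LP P j (𝓕⁻ m) = 𝓕⁻ (fun v => 𝓕 (P.φ : Rd d → ℂ) ((2:ℝ) ^ (-j) • v) * m v) := by
  funext x
  have h := conv_fourierInv (integrable_dil j P.φ.integrable) hm x
  simp only [fourier_dil] at h
  exact h

lemma integrable_fourier_mul {d : ℕ} {k m : Rd d → ℂ} (hk : Integrable k) (hm : Integrable m)
    (c : ℝ) : Integrable (fun v => 𝓕 k (c • v) * m v) := by
  refine hm.bdd_mul (c := ∫ x, ‖k x‖)
    ((continuous_fourier' hk).comp (continuous_const_smul c)).aestronglyMeasurable ?_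
  exact Eventually.of_forall fun v => VectorFourier.norm_fourierIntegral_le_integral_norm _ _ _ _ _

lemma schwartz_eq_fourierInv {d : ℕ} (a : 𝓢(Rd d, ℂ)) :
    (a : Rd d → ℂ) = 𝓕⁻ (𝓕 (a : Rd d → ℂ)) := by
  rw [← SchwartzMap.fourier_coe, ← SchwartzMap.fourierInv_coe,
    FourierTransform.fourierInv_fourier_eq]

lemma integrable_fourier_schwartz {d : ℕ} (a : 𝓢(Rd d, ℂ)) : Integrable (𝓕 (a : Rd d → ℂ)) := by
  rw [← SchwartzMap.fourier_coe]
  exact (𝓕 a).integrable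

lemma continuous_LP {d : ℕ} (P : LPData d) (j : ℤ) (a : 𝓢(Rd d, ℂ)) : Continuous (LP P j a) := by
  rw [schwartz_eq_fourierInv a, LP_eq P j (integrable_fourier_schwartz a)]
  exact continuous_fourierInv'
    (integrable_fourier_mul P.φ.integrable (integrable_fourier_schwartz a) _)

/-- The frequency block of the Poisson extension is the corresponding block of the datum convolved
with the dilated localized kernel: on the support of the block the kernel's Fourier transform is
the Poisson multiplier. -/
lemma LP_poisson_eq {d : ℕ} (P : LPData d) (j : ℤ) (a K : 𝓢(Rd d, ℂ)) {t : ℝ} (ht : 0 < t)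
    (hK : ∀ v : Rd d, 1 / (4 * Real.pi) ≤ ‖v‖ → ‖v‖ ≤ 1 / Real.pi →
      𝓕 (K : Rd d → ℂ) v = ((Real.exp (-((2:ℝ) ^ j * t) * (2 * Real.pi * ‖v‖)) : ℝ) : ℂ)) :
    LP P j (fun x => (((2 * Real.pi) ^ d : ℝ) : ℂ)⁻¹ *
        ∫ ξ : Rd d, Complex.exp (Complex.I * (↑(⟪x, ξ⟫) : ℂ)) *
          Complex.exp (-(↑(t * ‖ξ‖) : ℂ)) * FT (⇑a) ξ)
      = fun x => ∫ y, dil j K y * LP P j a (x - y) := by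
  have ha := integrable_fourier_schwartz a
  have hpi := Real.pi_pos
  have hm : Integrable (fun v => ((Real.exp (-t * (2 * Real.pi * ‖v‖)) : ℝ) : ℂ) *
      𝓕 (a : Rd d → ℂ) v) := by
    refine ha.bdd_mul (c := 1) (Continuous.aestronglyMeasurable (by fun_prop)) ?_
    refine Eventually.of_forall fun v => ?_
    rw [Complex.norm_real, Real.norm_of_nonneg (Real.exp_pos _).le, Real.exp_le_one_iff]
    have : 0 ≤ t * (2 * Real.pi * ‖v‖) := by positivity
    linarith
  simp_rw [poisson_eq_fourierInv]
  rw [show (fun x => 𝓕⁻ (fun v => ((Real.exp (-t * (2 * Real.pi * ‖v‖)) : ℝ) : ℂ) *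
      𝓕 (a : Rd d → ℂ) v) x) = 𝓕⁻ (fun v => ((Real.exp (-t * (2 * Real.pi * ‖v‖)) : ℝ) : ℂ) *
      𝓕 (a : Rd d → ℂ) v) from rfl, LP_eq P j hm]
  have hLP : LP P j a = 𝓕⁻ (fun v => 𝓕 (P.φ : Rd d → ℂ) ((2:ℝ) ^ (-j) • v) *
      𝓕 (a : Rd d → ℂ) v) := by
    conv_lhs => rw [schwartz_eq_fourierInv a]
    exact LP_eq P j ha
  funext x
  rw [hLP, conv_fourierInv (integrable_dil j K.integrable)
    (integrable_fourier_mul P.φ.integrable ha _)]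
  refine congrFun (congrArg _ (funext fun v => ?_)) x
  rw [fourier_dil]
  set w := (2:ℝ) ^ (-j) • v with hw
  by_cases h0 : 𝓕 (P.φ : Rd d → ℂ) w = 0
  · simp [h0]
  · have h1 : FT P.φ ((2 * Real.pi) • w) ≠ 0 := by
      rw [FT_eq_fourier, smul_smul, inv_mul_cancel₀ (by positivity), one_smul]
      exact h0
    obtain ⟨h2, h3⟩ := P.hsupp _ h1
    rw [norm_smul, Real.norm_of_nonneg (by positivity)] at h2 h3
    have h4 : 1 / (4 * Real.pi) ≤ ‖w‖ := by
      rw [div_le_iff₀ (by positivity)]; linarith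
    have h5 : ‖w‖ ≤ 1 / Real.pi := by
      rw [le_div_iff₀ hpi]; linarith
    have h6 : (2:ℝ) ^ j * ‖w‖ = ‖v‖ := by
      rw [hw, norm_smul, Real.norm_of_nonneg (by positivity), ← mul_assoc, ← zpow_add₀ two_ne_zero]
      simp
    rw [hK w h4 h5, ← h6]
    rw [show -((2:ℝ) ^ j * t) * (2 * Real.pi * ‖w‖) = -t * (2 * Real.pi * ((2:ℝ) ^ j * ‖w‖)) by ring]
    ring

/-! ### Sequence norms and time integration -/

lemma ellNorm_le_mul {r : ℝ≥0∞} (hr : 1 ≤ r) {a b : ℤ → ℝ≥0∞} (c : ℝ≥0∞) (h : ∀ j, a j ≤ c * b j) :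
    ellNorm r a ≤ c * ellNorm r b := by
  unfold ellNorm
  split_ifs with hrt
  · rw [ENNReal.mul_iSup]
    exact iSup_mono h
  · have hr0 : 0 < r.toReal := ENNReal.toReal_pos (zero_lt_one.trans_le hr).ne' hrt
    calc _ ≤ (∑' j, c ^ r.toReal * b j ^ r.toReal) ^ (1 / r.toReal) := by
          refine ENNReal.rpow_le_rpow (ENNReal.tsum_le_tsum fun j => ?_) (by positivity)
          rw [← ENNReal.mul_rpow_of_nonneg _ _ hr0.le]
          exact ENNReal.rpow_le_rpow (h j) hr0.le
      _ = _ := by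
          rw [ENNReal.tsum_mul_left, ENNReal.mul_rpow_of_nonneg _ _ (by positivity),
            ← ENNReal.rpow_mul, mul_one_div_cancel hr0.ne', ENNReal.rpow_one]

lemma lintegral_inv_one_add_sq (b : ℝ) (hb : 0 < b) :
    ∫⁻ t in Set.Ioi (0:ℝ), ENNReal.ofReal ((1 + (b * t) ^ 2)⁻¹)
      = ENNReal.ofReal (b⁻¹ * (Real.pi / 2)) := by
  have hint : Integrable (fun t : ℝ => (1 + (b * t) ^ 2)⁻¹) :=
    integrable_inv_one_add_sq.comp_mul_left' hb.ne'
  rw [← ofReal_integral_eq_lintegral_ofReal hint.integrableOn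
    (Eventually.of_forall fun t => by positivity),
    integral_comp_mul_left_Ioi (fun t : ℝ => (1 + t ^ 2)⁻¹) 0 hb, mul_zero,
    integral_Ioi_inv_one_add_sq, Real.arctan_zero, sub_zero, smul_eq_mul]

/-- Integration in time gains the factor `2^{-j/q}`; the constant is uniform in `q`. -/
lemma LqLp_le {d : ℕ} {q p : ℝ≥0∞} (hq : 1 ≤ q) (g : ℝ → Rd d → ℂ) (j : ℤ) {C : ℝ} (hC : 0 < C)
    (A : ℝ≥0∞) (h : ∀ t, 0 < t → eLpNorm (g t) p volume
      ≤ ENNReal.ofReal (C / (1 + ((2:ℝ) ^ j * t) ^ 2)) * A) (s : ℝ) :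
    ENNReal.ofReal ((2:ℝ) ^ ((s + (1 / q).toReal) * (j:ℝ))) * LqLp q p g
      ≤ ENNReal.ofReal (C * (Real.pi / 2)) * (ENNReal.ofReal ((2:ℝ) ^ (s * (j:ℝ))) * A) := by
  have hpi2 : 1 ≤ Real.pi / 2 := by linarith [Real.pi_gt_three]
  unfold LqLp
  split_ifs with hqt
  · subst hqt
    simp only [ENNReal.div_top, ENNReal.toReal_zero, add_zero]
    rw [mul_left_comm]
    refine mul_le_mul' le_rfl ?_
    refine essSup_le_of_ae_le _ ?_
    refine ae_restrict_of_forall_mem measurableSet_Ioi fun t ht => (h t ht).trans ?_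
    refine mul_le_mul' (ENNReal.ofReal_le_ofReal ?_) le_rfl
    refine (div_le_self hC.le ?_).trans (le_mul_of_one_le_right hC.le hpi2)
    nlinarith [sq_nonneg ((2:ℝ) ^ j * t)]
  · have hQ1 : 1 ≤ q.toReal := by
      rw [← ENNReal.toReal_one]
      exact ENNReal.toReal_mono hqt hq
    rw [ENNReal.toReal_div, ENNReal.toReal_one]
    set Q := q.toReal
    have hQ0 : 0 < Q := by linarith
    have hb : (0:ℝ) < 2 ^ j := by positivity
    have hmain : ∫⁻ t in Set.Ioi (0:ℝ), (eLpNorm (g t) p volume) ^ Q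
        ≤ ENNReal.ofReal (((2:ℝ) ^ j)⁻¹ * (Real.pi / 2)) * (ENNReal.ofReal C * A) ^ Q := by
      rw [← lintegral_inv_one_add_sq _ hb, ← lintegral_mul_const _ (by fun_prop)]
      refine setLIntegral_mono' measurableSet_Ioi fun t ht => ?_
      refine (ENNReal.rpow_le_rpow (h t ht) hQ0.le).trans ?_
      rw [div_eq_inv_mul, ENNReal.ofReal_mul (by positivity), mul_assoc,
        ENNReal.mul_rpow_of_nonneg _ _ hQ0.le]
      gcongr
      refine ENNReal.rpow_le_self_of_le_one ?_ hQ1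
      rw [ENNReal.ofReal_le_one]
      refine inv_le_one_of_one_le₀ ?_
      nlinarith [sq_nonneg ((2:ℝ) ^ j * t)]
    have hroot : (∫⁻ t in Set.Ioi (0:ℝ), (eLpNorm (g t) p volume) ^ Q) ^ (1 / Q)
        ≤ ENNReal.ofReal ((2:ℝ) ^ (-(1 / Q * (j:ℝ)))) * ENNReal.ofReal (Real.pi / 2) *
          (ENNReal.ofReal C * A) := by
      refine (ENNReal.rpow_le_rpow hmain (by positivity)).trans ?_
      rw [ENNReal.mul_rpow_of_nonneg _ _ (by positivity), ← ENNReal.rpow_mul,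
        mul_one_div_cancel hQ0.ne', ENNReal.rpow_one, ENNReal.ofReal_mul (by positivity),
        ENNReal.mul_rpow_of_nonneg _ _ (by positivity)]
      gcongr
      · rw [ENNReal.ofReal_rpow_of_pos (by positivity), ← Real.rpow_intCast, ← Real.rpow_neg two_pos.le,
          ← Real.rpow_mul two_pos.le]
        apply le_of_eq
        congr 2
        ring
      · calc _ ≤ ENNReal.ofReal (Real.pi / 2) ^ (1:ℝ) := by
              refine ENNReal.rpow_le_rpow_of_exponent_le ?_ ?_
              · rwa [ENNReal.one_le_ofReal]
              · rwa [div_le_one hQ0]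
          _ = _ := ENNReal.rpow_one _
    calc _ ≤ ENNReal.ofReal ((2:ℝ) ^ ((s + 1 / Q) * (j:ℝ))) *
          (ENNReal.ofReal ((2:ℝ) ^ (-(1 / Q * (j:ℝ)))) * ENNReal.ofReal (Real.pi / 2) *
          (ENNReal.ofReal C * A)) := by gcongr
      _ = (ENNReal.ofReal ((2:ℝ) ^ ((s + 1 / Q) * (j:ℝ))) *
          ENNReal.ofReal ((2:ℝ) ^ (-(1 / Q * (j:ℝ))))) * ENNReal.ofReal (Real.pi / 2) *
          (ENNReal.ofReal C * A) := by ring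
      _ = _ := by
        rw [← ENNReal.ofReal_mul (by positivity), ← Real.rpow_add two_pos,
          show (s + 1 / Q) * (j:ℝ) + -(1 / Q * (j:ℝ)) = s * j by ring,
          ENNReal.ofReal_mul hC.le]
        ring

/-- Maximal regularity estimate for the boundary semigroup
`e^{-t|∇|}` in Chemin–Lerner spaces:
`‖e^{-t|∇|} a‖_{L̃^{q₁}(Ḃ^{s+1/q₁}_{p,r})} ≤ C ‖a‖_{Ḃ^s_{p,r}}`. -/
theorem poisson_extension_chemin_lerner_estimate (d : ℕ) (hd : 1 ≤ d) (P : LPData d) :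
    ∃ C > (0:ℝ), ∀ s : ℝ, ∀ p r q₁ : ℝ≥0∞, 1 ≤ p → 1 ≤ r → 1 ≤ q₁ →
      ∀ a : SchwartzMap (Rd d) ℂ,
      CL P (s + (1/q₁).toReal) q₁ p r
          (fun t x =>
            (((2 * Real.pi) ^ d : ℝ) : ℂ)⁻¹ *
              ∫ ξ : Rd d, Complex.exp (Complex.I * (↑(⟪x, ξ⟫) : ℂ)) *
                Complex.exp (-(↑(t * ‖ξ‖) : ℂ)) * FT (⇑a) ξ)
        ≤ ENNReal.ofReal C * besov P s p r (⇑a) := by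
  obtain ⟨C, hC, hK⟩ := exists_kernel d
  have hpi := Real.pi_pos
  refine ⟨C * (Real.pi / 2), by positivity, ?_⟩
  intro s p r q₁ hp hr hq a
  refine ellNorm_le_mul hr _ fun j => ?_
  refine LqLp_le hq _ j hC _ (fun t ht => ?_) s
  obtain ⟨K, hK1, hK2⟩ := hK ((2:ℝ) ^ j * t) (by positivity)
  rw [LP_poisson_eq P j a K ht hK1]
  refine (eLpNorm_conv_le (integrable_dil j K.integrable) (continuous_LP P j a) hp).trans ?_
  rw [integral_norm_dil]
  gcongr
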